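/- Let q ≥ 3 be an integer and let a be an integer coprime to q. Let c > 0 and X ≥ 14735 be real numbers such that c·φ(q) < 1 and such that |π(x;q,a) − Li(x)/φ(q)| < c·x/(log x)² holds for all real x ≥ X. Then for every integer n ≥ 1, either p_n(q,a) ≤ X or n·φ(q)·log(n·φ(q)) < p_n(q,a) < n·φ(q)·( log(n·φ(q)) + (4/3)·log log(n·φ(q)) ). -/

import Mathlib

/-- `π(x;q,a) = #{p ≤ x : p prime, p ≡ a (mod q)}`. -/
noncomputable def primesPi (x : ℝ) (q : ℕ) (a : ℤ) : ℕ :=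
  ((Finset.Icc 1 ⌊x⌋₊).filter (fun p : ℕ => p.Prime ∧ (p : ZMod q) = (a : ZMod q))).card

/-- `Li(x) = ∫₂ˣ dt / log t`, the logarithmic integral. -/
noncomputable def Li (x : ℝ) : ℝ := ∫ t in (2 : ℝ)..x, 1 / Real.log t

/-- `p_n(q,a)`, the `n`-th smallest prime congruent to `a` modulo `q` (for `n ≥ 1`). -/
noncomputable def nthPrimeMod (q : ℕ) (a : ℤ) (n : ℕ) : ℕ :=
  Nat.nth (fun p : ℕ => p.Prime ∧ (p : ZMod q) = (a : ZMod q)) (n - 1)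

open Real Set

lemma hasDerivAt_Li {t : ℝ} (ht : 1 < t) : HasDerivAt Li (1 / log t) t := by
  have hcont : ContinuousOn (fun s : ℝ => 1 / log s) (Ioi 1) := fun s (hs : 1 < s) =>
    (continuousAt_const.div (continuousAt_log (by linarith))
      (log_pos hs).ne').continuousWithinAt
  refine intervalIntegral.integral_hasDerivAt_right ?_ ?_ ?_
  · apply ContinuousOn.intervalIntegrable
    refine hcont.mono fun s hs => ?_
    rw [mem_uIcc] at hs
    rcases hs with hs | hs <;> exact mem_Ioi.2 (by linarith [hs.1])
  · exact hcont.stronglyMeasurableAtFilter isOpen_Ioi t ht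
  · exact hcont.continuousAt (Ioi_mem_nhds ht)

lemma sub_le_sub_of_hasDerivAt_le {f g f' g' : ℝ → ℝ} {A B : ℝ} (hAB : A ≤ B)
    (hf : ∀ t ∈ Icc A B, HasDerivAt f (f' t) t) (hg : ∀ t ∈ Icc A B, HasDerivAt g (g' t) t)
    (hle : ∀ t ∈ Icc A B, f' t ≤ g' t) : f B - f A ≤ g B - g A := by
  have hmono : MonotoneOn (g - f) (Icc A B) := by
    refine monotoneOn_of_hasDerivWithinAt_nonneg (convex_Icc A B)
      (f' := fun t => g' t - f' t)
      (fun t ht => ((hg t ht).sub (hf t ht)).continuousAt.continuousWithinAt)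
      (fun t ht => ((hg t (interior_subset ht)).sub
        (hf t (interior_subset ht))).hasDerivWithinAt)
      (fun t ht => sub_nonneg.2 (hle t (interior_subset ht)))
  have h := hmono (left_mem_Icc.2 hAB) (right_mem_Icc.2 hAB) hAB
  simp only [Pi.sub_apply] at h
  linarith

lemma hasDerivAt_div_log_pow {t : ℝ} (ht : 1 < t) (k : ℕ) :
    HasDerivAt (fun s : ℝ => s / log s ^ k) (1 / log t ^ k - k / log t ^ (k + 1)) t := by
  have hl : 0 < log t := log_pos ht
  have ht0 : t ≠ 0 := by linarith
  refine ((hasDerivAt_id' t).fun_div ((hasDerivAt_log ht0).fun_pow k)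
    (pow_pos hl k).ne').congr_deriv ?_
  rcases k with _ | k
  · simp
  · simp only [Nat.add_sub_cancel]
    field_simp
    ring

/-- Bounding `1 / log` on `[A, B]` by the chord of `1 / s` between `s = log A` and `s = log B`. -/
lemma Li_sub_le_chord {A B : ℝ} (hA : 1 < A) (hAB : A ≤ B) :
    Li B - Li A ≤ (B * (log A + 1) - A * (log B + 1)) / (log A * log B) := by
  have ha : 0 < log A := log_pos hA
  have hb : 0 < log B := log_pos (hA.trans_le hAB)
  have h := sub_le_sub_of_hasDerivAt_le (f := Li) (f' := fun t => 1 / log t)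
    (g := fun t => (t * (log A + log B + 1) - t * log t) / (log A * log B))
    (g' := fun t => (log A + log B - log t) / (log A * log B)) hAB
    (fun t ht => hasDerivAt_Li (hA.trans_le ht.1))
    (fun t ht => by
      have ht0 : t ≠ 0 := by linarith [ht.1]
      refine ((((hasDerivAt_id' t).mul_const (log A + log B + 1)).fun_sub
        (hasDerivAt_mul_log ht0)).div_const (log A * log B)).congr_deriv ?_
      ring)
    (fun t ht => by
      have h1 : log A ≤ log t := log_le_log (by linarith) ht.1
      have h2 : log t ≤ log B := log_le_log (by linarith [ht.1]) ht.2
      rw [div_le_div_iff₀ (by linarith) (by positivity)]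
      nlinarith [mul_nonneg (sub_nonneg.2 h1) (sub_nonneg.2 h2)])
  refine h.trans (le_of_eq ?_)
  ring

lemma Li_two_pow_sub_le (k : ℕ) (hk : 1 ≤ k) :
    Li (2 ^ (k + 1)) - Li (2 ^ k) ≤
      2 ^ k * ((k - 1) * log 2 + 1) / (k * (k + 1)) / log 2 ^ 2 := by
  refine (Li_sub_le_chord (one_lt_pow₀ one_lt_two (by omega))
    (pow_le_pow_right₀ one_le_two (Nat.le_succ k))).trans (le_of_eq ?_)
  have hl : 0 < log 2 := log_pos one_lt_two
  have hk' : (0 : ℝ) < k := by exact_mod_cast hk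
  rw [log_pow, log_pow, Nat.succ_eq_add_one]
  push_cast
  field_simp
  ring

lemma Li_two : Li 2 = 0 := by simp [Li]

lemma log_4096 : log 4096 = 12 * log 2 := by
  rw [show (4096 : ℝ) = 2 ^ 12 by norm_num, log_pow]
  norm_num

lemma Li_4096_le :
    Li 4096 ≤ 4096 / log 4096 + 4096 / log 4096 ^ 2 + 4 * (4096 / log 4096 ^ 3) := by
  have h1 := Li_two_pow_sub_le 1 (by norm_num)
  have h2 := Li_two_pow_sub_le 2 (by norm_num)
  have h3 := Li_two_pow_sub_le 3 (by norm_num)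
  have h4 := Li_two_pow_sub_le 4 (by norm_num)
  have h5 := Li_two_pow_sub_le 5 (by norm_num)
  have h6 := Li_two_pow_sub_le 6 (by norm_num)
  have h7 := Li_two_pow_sub_le 7 (by norm_num)
  have h8 := Li_two_pow_sub_le 8 (by norm_num)
  have h9 := Li_two_pow_sub_le 9 (by norm_num)
  have h10 := Li_two_pow_sub_le 10 (by norm_num)
  have h11 := Li_two_pow_sub_le 11 (by norm_num)
  norm_num [Li_two] at h1 h2 h3 h4 h5 h6 h7 h8 h9 h10 h11
  have hlo := log_two_gt_d9
  have hhi := log_two_lt_d9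
  have hl : 0 < log 2 := log_pos one_lt_two
  rw [log_4096]
  set l := log 2
  have key : Li 4096 ≤ (1 + 4/6*(l+1) + 8/12*(2*l+1) + 16/20*(3*l+1) + 32/30*(4*l+1)
      + 64/42*(5*l+1) + 128/56*(6*l+1) + 256/72*(7*l+1) + 512/90*(8*l+1)
      + 1024/110*(9*l+1) + 2048/132*(10*l+1)) / l ^ 2 := by
    have e : (1 + 4/6*(l+1) + 8/12*(2*l+1) + 16/20*(3*l+1) + 32/30*(4*l+1)
      + 64/42*(5*l+1) + 128/56*(6*l+1) + 256/72*(7*l+1) + 512/90*(8*l+1)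
      + 1024/110*(9*l+1) + 2048/132*(10*l+1)) / l ^ 2 = (l^2)⁻¹ + 4*(l+1)/6/l^2
      + 8*(2*l+1)/12/l^2 + 16*(3*l+1)/20/l^2 + 32*(4*l+1)/30/l^2
      + 64*(5*l+1)/42/l^2 + 128*(6*l+1)/56/l^2 + 256*(7*l+1)/72/l^2 + 512*(8*l+1)/90/l^2
      + 1024*(9*l+1)/110/l^2 + 2048*(10*l+1)/132/l^2 := by ring
    rw [e]
    linarith
  refine key.trans ?_
  have e : 4096 / (12 * l) + 4096 / (12 * l) ^ 2 + 4 * (4096 / (12 * l) ^ 3) =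
      (4096 / 12 * l + 4096 / 144 + 4 * 4096 / 1728 / l) / l ^ 2 := by
    field_simp
    ring
  rw [e]
  refine div_le_div_of_nonneg_right ?_ (by positivity)
  have hinv : 1.44 ≤ 1 / l := by
    rw [le_div_iff₀ hl]
    linarith
  have : 4 * 4096 / 1728 / l = 4 * 4096 / 1728 * (1 / l) := by ring
  rw [this]
  linarith

lemma le_Li_4096 : 4096 / log 4096 + 4096 / log 4096 ^ 2 ≤ Li 4096 := by
  have hlo := log_two_gt_d9
  have hhi := log_two_lt_d9
  have hl : 0 < log 2 := log_pos one_lt_two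
  have h := sub_le_sub_of_hasDerivAt_le (A := 2) (B := 4096) (by norm_num)
    (f := fun t => t / log t ^ 1 + t / log t ^ 2 + 2 / log 4096 ^ 3 * t)
    (f' := fun t => (1 / log t ^ 1 - (1 : ℕ) / log t ^ (1 + 1)) +
      (1 / log t ^ 2 - (2 : ℕ) / log t ^ (2 + 1)) + 2 / log 4096 ^ 3 * 1)
    (g := Li) (g' := fun t => 1 / log t)
    (fun t ht => by
      have ht1 : 1 < t := by linarith [ht.1]
      exact ((hasDerivAt_div_log_pow ht1 1).add (hasDerivAt_div_log_pow ht1 2)).add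
        ((hasDerivAt_id t).const_mul _))
    (fun t ht => hasDerivAt_Li (by linarith [ht.1]))
    (fun t ht => by
      have h1 : 0 < log t := log_pos (by linarith [ht.1])
      have h2 : log t ≤ log 4096 := log_le_log (by linarith [ht.1]) ht.2
      have h3 : 2 / log 4096 ^ 3 ≤ 2 / log t ^ 3 := by gcongr
      norm_num
      linarith)
  simp only [Li_two, log_4096, pow_one] at h ⊢
  set l := log 2
  have hinv : 1 / l ≤ 1.443 := by
    rw [div_le_iff₀ hl]
    linarith
  have hinv' : 1.442 ≤ 1 / l := by
    rw [le_div_iff₀ hl]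
    linarith
  have e : 2 / l + 2 / l ^ 2 - 2 / (12 * l) ^ 3 * 4094 =
      2 * (1 / l) + 2 * (1 / l) ^ 2 - 8188 / 1728 * (1 / l) ^ 3 := by
    field_simp
    ring
  have hneg : 2 * (1 / l) + 2 * (1 / l) ^ 2 - 8188 / 1728 * (1 / l) ^ 3 ≤ 0 := by
    have hcube : (1 / l) ^ 3 ≥ 1.442 ^ 3 := by gcongr
    have hsq : (1 / l) ^ 2 ≤ 1.443 ^ 2 := by gcongr
    norm_num at hcube hsq hinv hinv' ⊢
    linarith
  linarith

lemma le_Li {x : ℝ} (hx : 4096 ≤ x) : x / log x + x / log x ^ 2 ≤ Li x := by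
  have h := sub_le_sub_of_hasDerivAt_le (A := 4096) (B := x) hx
    (f := fun t => t / log t ^ 1 + t / log t ^ 2)
    (f' := fun t => (1 / log t ^ 1 - (1 : ℕ) / log t ^ (1 + 1)) +
      (1 / log t ^ 2 - (2 : ℕ) / log t ^ (2 + 1)))
    (g := Li) (g' := fun t => 1 / log t)
    (fun t ht => by
      have ht1 : 1 < t := by linarith [ht.1]
      exact (hasDerivAt_div_log_pow ht1 1).add (hasDerivAt_div_log_pow ht1 2))
    (fun t ht => hasDerivAt_Li (by linarith [ht.1]))
    (fun t ht => by
      have h1 : 0 < log t := log_pos (by linarith [ht.1])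
      have h3 : 0 ≤ 2 / log t ^ 3 := by positivity
      norm_num
      linarith)
  simp only [pow_one] at h
  linarith [le_Li_4096]

lemma Li_le {x : ℝ} (hx : 4096 ≤ x) :
    Li x ≤ x / log x + x / log x ^ 2 + 4 * (x / log x ^ 3) := by
  have h := sub_le_sub_of_hasDerivAt_le (A := 4096) (B := x) hx
    (g := fun t => t / log t ^ 1 + t / log t ^ 2 + 4 * (t / log t ^ 3))
    (g' := fun t => (1 / log t ^ 1 - (1 : ℕ) / log t ^ (1 + 1)) +
      (1 / log t ^ 2 - (2 : ℕ) / log t ^ (2 + 1)) +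
      4 * (1 / log t ^ 3 - (3 : ℕ) / log t ^ (3 + 1)))
    (f := Li) (f' := fun t => 1 / log t)
    (fun t ht => hasDerivAt_Li (by linarith [ht.1]))
    (fun t ht => by
      have ht1 : 1 < t := by linarith [ht.1]
      exact ((hasDerivAt_div_log_pow ht1 1).add (hasDerivAt_div_log_pow ht1 2)).add
        ((hasDerivAt_div_log_pow ht1 3).const_mul 4))
    (fun t ht => by
      have h1 : 6 ≤ log t := by
        have h2 : log 4096 ≤ log t := log_le_log (by norm_num) ht.1
        linarith [log_4096, log_two_gt_d9]
      have h3 : 0 ≤ 2 * (log t - 6) / log t ^ 4 :=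
        div_nonneg (by linarith) (by positivity)
      have e : (1 / log t ^ 1 - (1 : ℕ) / log t ^ (1 + 1)) +
          (1 / log t ^ 2 - (2 : ℕ) / log t ^ (2 + 1)) +
          4 * (1 / log t ^ 3 - (3 : ℕ) / log t ^ (3 + 1)) =
          1 / log t + 2 * (log t - 6) / log t ^ 4 := by
        have : log t ≠ 0 := by linarith
        push_cast
        field_simp
        ring
      rw [e]
      linarith)
  simp only [pow_one] at h
  linarith [Li_4096_le]

lemma div_le_log_of_exp_one_pow_le {x : ℝ} (m k : ℕ) (hk : 0 < k)
    (h : exp 1 ^ m ≤ x ^ k) : (m : ℝ) / k ≤ log x := by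
  have hk' : (0 : ℝ) < k := by exact_mod_cast hk
  have h1 := log_le_log (pow_pos (exp_pos 1) m) h
  rw [log_pow, log_pow, log_exp, mul_one] at h1
  rw [div_le_iff₀ hk']
  linarith

lemma le_log_of_14735_le {x : ℝ} (hx : 14735 ≤ x) : 9.59 ≤ log x := by
  have h := div_le_log_of_exp_one_pow_le (x := 14735) 211 22 (by norm_num) <|
    (pow_le_pow_left₀ (exp_pos 1).le exp_one_lt_d9.le 211).trans (by norm_num)
  have h' := log_le_log (by norm_num) hx
  norm_num at h ⊢
  linarith

lemma le_log_of_le {L : ℝ} (hL : 9.59 ≤ L) : 2.26 ≤ log L := by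
  have h := div_le_log_of_exp_one_pow_le (x := 9.59) 113 50 (by norm_num) <|
    (pow_le_pow_left₀ (exp_pos 1).le exp_one_lt_d9.le 113).trans (by norm_num)
  have h' := log_le_log (by norm_num) hL
  norm_num at h h' ⊢
  linarith

lemma log_le_div_four {L : ℝ} (hL : 9.59 ≤ L) : log L ≤ L / 4 := by
  have h10 : log 10 ≤ 2.4 := by
    have h := log_le_log (by norm_num)
      ((show (10 : ℝ) ^ 5 ≤ 2.7182818283 ^ 12 by norm_num).trans
        (pow_le_pow_left₀ (by norm_num) exp_one_gt_d9.le 12))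
    rw [log_pow, log_pow, log_exp] at h
    norm_num at h ⊢
    linarith
  have h := log_le_sub_one_of_pos (show 0 < L / 10 by linarith)
  rw [log_div (by linarith) (by norm_num)] at h
  norm_num at hL h10
  linarith

lemma mul_log_lt_of_lt_Li_add {x N : ℝ} (hx : 14735 ≤ x) (hN1 : 1 ≤ N)
    (hN : N < Li x + x / log x ^ 2) : N * log N < x := by
  have hL := le_log_of_14735_le hx
  have hl := le_log_of_le hL
  have hLi := Li_le (show 4096 ≤ x by linarith)
  set L := log x with hLdef
  have hL0 : 0 < L := by linarith
  have hx0 : 0 < x := by linarith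
  set u := 2 / L + 4 / L ^ 2 with hu
  have hu0 : 0 < u := by positivity
  have hu1 : u ≤ 0.26 := by
    have : u ≤ 2 / 9.59 + 4 / 9.59 ^ 2 := by rw [hu]; gcongr
    norm_num at this ⊢
    linarith
  have hNU : N < x / L * (1 + u) := by
    have : x / L * (1 + u) = x / L + x / L ^ 2 + 4 * (x / L ^ 3) + x / L ^ 2 := by
      rw [hu]
      field_simp
      ring
    linarith
  have hlogN : log N ≤ L - log L + u := by
    have h1 : log N ≤ log (x / L * (1 + u)) := log_le_log (by linarith) hNU.le
    rw [log_mul (by positivity) (by positivity), log_div hx0.ne' hL0.ne'] at h1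
    have h2 := log_le_sub_one_of_pos (show 0 < 1 + u by linarith)
    linarith
  have hlog0 : 0 ≤ log N := log_nonneg hN1
  have hfactor : (1 + u) * (L - log L + u) ≤ L := by
    have h1 : L - log L + u ≤ L - 2 := by
      norm_num at hl hu1
      linarith
    have h2 : (1 + u) * (L - 2) ≤ L := by
      have : (1 + u) * (L - 2) = L - 8 / L ^ 2 := by
        rw [hu]
        field_simp
        ring
      rw [this]
      have : 0 ≤ 8 / L ^ 2 := by positivity
      linarith
    exact (mul_le_mul_of_nonneg_left h1 (by linarith)).trans h2
  have hpos : 0 < L - log L + u := by linarith [log_le_div_four hL]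
  calc N * log N ≤ N * (L - log L + u) := by gcongr
    _ < x / L * (1 + u) * (L - log L + u) := by gcongr
    _ = x / L * ((1 + u) * (L - log L + u)) := by ring
    _ ≤ x / L * L := by gcongr
    _ = x := by field_simp

lemma lt_mul_log_add_of_Li_sub_lt {x N : ℝ} (hx : 14735 ≤ x)
    (hN : Li x - x / log x ^ 2 < N) : x < N * (log N + 4 / 3 * log (log N)) := by
  have hL := le_log_of_14735_le hx
  have hl4 := log_le_div_four hL
  have hLi := le_Li (show 4096 ≤ x by linarith)
  set L := log x with hLdef
  have hL9 : 9 < L := by norm_num at hL; linarith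
  have hL0 : 0 < L := by linarith
  have hx0 : 0 < x := by linarith
  have hNx : x / L < N := by linarith
  have hxL : 0 < x / L := by positivity
  have hlogN : L - log L ≤ log N := by
    rw [hLdef, ← log_div hx0.ne' (by rw [← hLdef]; exact hL0.ne')]
    exact log_le_log hxL hNx.le
  have hlogN' : 3 / 4 * L ≤ log N := by linarith
  have hloglog : 3 * log L ≤ 4 * log (log N) := by
    have h1 : L ^ 3 ≤ log N ^ 4 := by
      have : (3 / 4 * L) ^ 4 ≤ log N ^ 4 := by gcongr
      have h3 : 0 < L ^ 3 := by positivity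
      nlinarith
    have h2 := log_le_log (by positivity) h1
    rw [log_pow, log_pow] at h2
    exact_mod_cast h2
  calc x = x / L * L := by field_simp
    _ < N * L := by gcongr
    _ ≤ N * (log N + 4 / 3 * log (log N)) := by
      have : 0 < N := hxL.trans hNx
      gcongr
      linarith

lemma primesPi_nthPrimeMod {q : ℕ} [NeZero q] {a : ℤ} (ha : IsUnit (a : ZMod q)) {n : ℕ}
    (hn : 1 ≤ n) : primesPi (nthPrimeMod q a n) q a = n := by
  have hinf := Nat.infinite_setOfPred_prime_and_eq_mod ha
  have h : Nat.count (fun p : ℕ => p.Prime ∧ (p : ZMod q) = (a : ZMod q))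
      (nthPrimeMod q a n + 1) = n - 1 + 1 :=
    Nat.count_nth_succ_of_infinite hinf (n - 1)
  rw [Nat.count_eq_card_filter_range, Nat.sub_add_cancel hn] at h
  rw [primesPi, Nat.floor_natCast]
  refine Eq.trans (congrArg Finset.card ?_) h
  ext p
  simp only [Finset.mem_filter, Finset.mem_Icc, Finset.mem_range, Nat.lt_succ_iff]
  exact ⟨fun hp => ⟨hp.1.2, hp.2⟩, fun hp => ⟨⟨hp.2.1.one_le, hp.1⟩, hp.2⟩⟩

theorem nth_prime_bounds (q : ℕ) (hq : 3 ≤ q) (a : ℤ) (ha : Int.gcd a q = 1)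
    (c X : ℝ) (hc : 0 < c) (hX : 14735 ≤ X)
    (hcphi : c * (Nat.totient q : ℝ) < 1)
    (hbound : ∀ x : ℝ, X ≤ x →
      |(primesPi x q a : ℝ) - Li x / (Nat.totient q : ℝ)| < c * x / Real.log x ^ 2)
    (n : ℕ) (hn : 1 ≤ n) :
    (nthPrimeMod q a n : ℝ) ≤ X ∨
      ((n : ℝ) * (Nat.totient q : ℝ) * Real.log ((n : ℝ) * (Nat.totient q : ℝ)) <
          (nthPrimeMod q a n : ℝ) ∧
        (nthPrimeMod q a n : ℝ) <
          (n : ℝ) * (Nat.totient q : ℝ) *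
            (Real.log ((n : ℝ) * (Nat.totient q : ℝ)) +
              4 / 3 * Real.log (Real.log ((n : ℝ) * (Nat.totient q : ℝ))))) := by
  rw [or_iff_not_imp_left, not_le]
  intro hlt
  have : NeZero q := ⟨by omega⟩
  have hunit : IsUnit (a : ZMod q) :=
    (ZMod.coe_int_isUnit_iff_isCoprime a q).2 (Int.isCoprime_iff_gcd_eq_one.2
      (by rwa [Int.gcd_comm]))
  have hb := hbound _ hlt.le
  rw [primesPi_nthPrimeMod hunit hn] at hb
  set x : ℝ := (nthPrimeMod q a n : ℝ)
  have hx : 14735 ≤ x := by linarith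
  have hφ1 : (1 : ℝ) ≤ Nat.totient q := by
    exact_mod_cast Nat.totient_pos.2 (by omega : 0 < q)
  set φ : ℝ := (Nat.totient q : ℝ)
  have hφ : 0 < φ := by linarith
  have hn1 : (1 : ℝ) ≤ n := by exact_mod_cast hn
  have hy : 0 < x / log x ^ 2 := by
    have : 0 < log x := log_pos (by linarith)
    have : 0 < x := by linarith
    positivity
  have hNφ : |n * φ - Li x| < x / log x ^ 2 := by
    have e : n * φ - Li x = (n - Li x / φ) * φ := by field_simp
    rw [e, abs_mul, abs_of_pos hφ]
    calc |n - Li x / φ| * φ < c * x / log x ^ 2 * φ := by gcongr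
      _ = c * φ * (x / log x ^ 2) := by ring
      _ < 1 * (x / log x ^ 2) := by gcongr
      _ = x / log x ^ 2 := one_mul _
  rw [abs_lt] at hNφ
  exact ⟨mul_log_lt_of_lt_Li_add hx (one_le_mul_of_one_le_of_one_le hn1 hφ1) (by linarith),
    lt_mul_log_add_of_Li_sub_lt hx (by linarith)⟩
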